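/- Let m ≥ 3, let X be a finite connected 2-connected graph with oriented edges such that the number N of maximal spanning trees of X not containing a given edge is independent of the edge, and let X̃ be its ℤ_m-homology cover. Then for all x, y ∈ X̃, d_Q(x,y) = (1/N)·Σ_T d_T(C^T_x, C^T_y), where the sum ranges over all maximal spanning trees T of X; consequently d_Q is symmetric and satisfies the triangle inequality, i.e. d_Q is a pseudometric on X̃. -/

import Mathlib

open Filter
open scoped ENNReal NNReal

/-- `F` is a coarse embedding of `(X, dX)` into `(Y, dY)`: there are non-decreasing
functions `ρ₋, ρ₊` tending to infinity which control the distortion of distances. -/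
def CoarseEmbeddingWith {X Y : Type*} (dX : X → X → ℝ) (dY : Y → Y → ℝ) (F : X → Y) : Prop :=
  ∃ ρminus ρplus : ℝ → ℝ, Monotone ρminus ∧ Monotone ρplus ∧
    Tendsto ρminus atTop atTop ∧ Tendsto ρplus atTop atTop ∧
    ∀ x x' : X, ρminus (dX x x') ≤ dY (F x) (F x') ∧ dY (F x) (F x') ≤ ρplus (dX x x')

def IsPseudoMetricOn {X : Type*} (d : X → X → ℝ) : Prop :=
  (∀ x, d x x = 0) ∧ (∀ x y, d x y = d y x) ∧ ∀ x y z, d x z ≤ d x y + d y z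

def IsMetricOn {X : Type*} (d : X → X → ℝ) : Prop :=
  (∀ x y, d x y = 0 ↔ x = y) ∧ (∀ x y, d x y = d y x) ∧ ∀ x y z, d x z ≤ d x y + d y z

/-- The diameter of a space with distance function `dY`. -/
noncomputable def spaceDiam {Y : Type*} (dY : Y → Y → ℝ) : ℝ :=
  sSup (Set.range fun p : Y × Y => dY p.1 p.2)

/-- `D` is a coarse disjoint union of the spaces `(Y i, dY i)`: it restricts to `dY i` on each
component `Y i`, and the distance between two distinct components exceeds the maximum of
their diameters. -/
def IsCoarseDisjointUnionOf {ι : Type*} {Y : ι → Type*} (dY : ∀ i, Y i → Y i → ℝ)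
    (D : (Σ i, Y i) → (Σ i, Y i) → ℝ) : Prop :=
  (∀ (i : ι) (x y : Y i), D ⟨i, x⟩ ⟨i, y⟩ = dY i x y) ∧
  ∀ i j, i ≠ j → ∀ (x : Y i) (y : Y j),
    max (spaceDiam (dY i)) (spaceDiam (dY j)) < D ⟨i, x⟩ ⟨j, y⟩

namespace MultiGraph

variable {V E : Type*}

/-- The initial vertex of a step traversing the edge `s.1` forwards (`s.2 = true`) or
backwards (`s.2 = false`). -/
def stepSrc (src tgt : E → V) (s : E × Bool) : V := if s.2 then src s.1 else tgt s.1

/-- The terminal vertex of a step. -/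
def stepTgt (src tgt : E → V) (s : E × Bool) : V := if s.2 then tgt s.1 else src s.1

/-- `p` is a walk from `a` to `b` in the multigraph with edge endpoint maps `src`, `tgt`. -/
def IsWalk (src tgt : E → V) : V → V → List (E × Bool) → Prop
  | a, b, [] => a = b
  | a, b, s :: p => stepSrc src tgt s = a ∧ IsWalk src tgt (stepTgt src tgt s) b p

/-- The multigraph is connected. -/
def Connected (src tgt : E → V) : Prop := ∀ a b : V, ∃ p, IsWalk src tgt a b p

/-- The graph distance between two vertices (with junk value if there is no walk). -/
noncomputable def gdist (src tgt : E → V) (a b : V) : ℕ :=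
  sInf {n | ∃ p, IsWalk src tgt a b p ∧ p.length = n}

/-- A cycle based at `a`: a nonempty closed walk repeating no edge and no vertex. -/
def IsCycle (src tgt : E → V) (a : V) (p : List (E × Bool)) : Prop :=
  IsWalk src tgt a a p ∧ p ≠ [] ∧ (p.map Prod.fst).Nodup ∧ (p.map (stepSrc src tgt)).Nodup

/-- The girth: the length of a shortest cycle (`⊤` if there are no cycles). -/
noncomputable def girth (src tgt : E → V) : ℕ∞ :=
  sInf {n : ℕ∞ | ∃ (a : V) (p : List (E × Bool)), IsCycle src tgt a p ∧ (p.length : ℕ∞) = n}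

/-- Removing any single edge leaves the graph connected. -/
def TwoConnected (src tgt : E → V) : Prop :=
  ∀ (e : E) (a b : V), ∃ p, IsWalk src tgt a b p ∧ ∀ s ∈ p, s.1 ≠ e

/-- `T` is the edge set of a maximal spanning tree: every pair of vertices is joined by a
walk through `T`, and every cycle of the graph uses an edge outside `T`. -/
def IsSpanningTree (src tgt : E → V) (T : Set E) : Prop :=
  (∀ a b : V, ∃ p, IsWalk src tgt a b p ∧ ∀ s ∈ p, s.1 ∈ T) ∧
  ∀ (a : V) (p : List (E × Bool)), IsCycle src tgt a p → ∃ s ∈ p, s.1 ∉ T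

/-- The number `N_e` of maximal spanning trees avoiding the edge `e`. -/
noncomputable def numTreesAvoiding (src tgt : E → V) (e : E) : ℕ :=
  Nat.card {T : Set E // IsSpanningTree src tgt T ∧ e ∉ T}

open Classical in
/-- A chosen geodesic from `a` to `b` (junk value `[]` if there is no walk). -/
noncomputable def geod (src tgt : E → V) (a b : V) : List (E × Bool) :=
  if h : ∃ p, IsWalk src tgt a b p ∧ p.length = gdist src tgt a b then h.choose else []

open Classical in
/-- The number of times the walk `p` traverses the edge `e` in the positive direction. -/
noncomputable def countF (e : E) (p : List (E × Bool)) : ℕ :=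
  (p.filter fun s => s.1 = e ∧ s.2 = true).length

open Classical in
/-- The number of times the walk `p` traverses the edge `e` in the negative direction. -/
noncomputable def countB (e : E) (p : List (E × Bool)) : ℕ :=
  (p.filter fun s => s.1 = e ∧ s.2 = false).length

/-- Two walks are `m`-congruent if for every edge the signed numbers of traversals agree
modulo `m`. -/
def MCongruent (m : ℕ) (p₁ p₂ : List (E × Bool)) : Prop :=
  ∀ e : E, ((countF e p₁ : ℤ) - (countB e p₁ : ℤ)) ≡
    ((countF e p₂ : ℤ) - (countB e p₂ : ℤ)) [ZMOD (m : ℤ)]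

/-- A walk has no backtrack if no step is immediately followed by the same edge reversed. -/
def NoBacktrack (p : List (E × Bool)) : Prop :=
  List.Chain' (fun s s' => ¬(s'.1 = s.1 ∧ s'.2 = !s.2)) p

section Cover

open Classical in
/-- The image in `(ℤ/m)^{E ∖ T₀}` of the generator of `π₁` corresponding to the edge `e`
(trivial if `e` lies in the maximal spanning tree `T₀`). -/
noncomputable def coverRho (m : ℕ) (T₀ : Set E) (e : E) : {e' : E // e' ∉ T₀} → ZMod m :=
  fun f => if f.1 = e then 1 else 0

/-- Source map of the `ℤ/m`-homology cover built from the maximal spanning tree `T₀`: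
the lift `(e, k)` of the edge `e` starts at `(src e, k)`. -/
def coverSrc (m : ℕ) (src : E → V) (T₀ : Set E) :
    E × ({e' : E // e' ∉ T₀} → ZMod m) → V × ({e' : E // e' ∉ T₀} → ZMod m) :=
  fun ek => (src ek.1, ek.2)

/-- Target map of the `ℤ/m`-homology cover: the lift `(e, k)` of the edge `e` ends at
`(tgt e, k + ρ(e))`. -/
noncomputable def coverTgt (m : ℕ) (tgt : E → V) (T₀ : Set E) :
    E × ({e' : E // e' ∉ T₀} → ZMod m) → V × ({e' : E // e' ∉ T₀} → ZMod m) :=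
  fun ek => (tgt ek.1, ek.2 + coverRho m T₀ ek.1)

open Classical in
/-- The number of positively oriented lifts of the edge `e` traversed by a walk in the cover. -/
noncomputable def countLiftF (m : ℕ) (T₀ : Set E) (e : E)
    (p : List ((E × ({e' : E // e' ∉ T₀} → ZMod m)) × Bool)) : ℕ :=
  (p.filter fun s => s.1.1 = e ∧ s.2 = true).length

open Classical in
/-- The number of negatively oriented lifts of the edge `e` traversed by a walk in the cover. -/
noncomputable def countLiftB (m : ℕ) (T₀ : Set E) (e : E)
    (p : List ((E × ({e' : E // e' ∉ T₀} → ZMod m)) × Bool)) : ℕ :=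
  (p.filter fun s => s.1.1 = e ∧ s.2 = false).length

/-- `φ(e, x, y)`: the smallest non-negative residue modulo `m` of the absolute difference
between the numbers of positively and negatively oriented lifts of `e` traversed by the
chosen geodesic from `x` to `y` in the `ℤ/m`-homology cover. -/
noncomputable def phi (m : ℕ) (src tgt : E → V) (T₀ : Set E) (e : E)
    (x y : V × ({e' : E // e' ∉ T₀} → ZMod m)) : ℕ :=
  (((countLiftF m T₀ e (geod (coverSrc m src T₀) (coverTgt m tgt T₀) x y) : ℤ) -
      (countLiftB m T₀ e (geod (coverSrc m src T₀) (coverTgt m tgt T₀) x y) : ℤ)).natAbs) % m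

/-- The pseudometric `d_Q` on the `ℤ/m`-homology cover:
`d_Q(x,y) = Σ_{e ∈ E} Σ_{T : e ∉ T} (1/N_e) · min{φ(e,x,y), m − φ(e,x,y)}`,
the inner sum ranging over maximal spanning trees not containing `e`. -/
noncomputable def dQ (m : ℕ) (src tgt : E → V) (T₀ : Set E)
    (x y : V × ({e' : E // e' ∉ T₀} → ZMod m)) : ℝ :=
  ∑ᶠ (e : E), ∑ᶠ (T : Set E) (_ : IsSpanningTree src tgt T ∧ e ∉ T),
    (1 / (numTreesAvoiding src tgt e : ℝ)) *
      min (phi m src tgt T₀ e x y : ℝ) ((m : ℝ) - (phi m src tgt T₀ e x y : ℝ))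

open Classical in
/-- The distance `d_T(C^T_x, C^T_y)` between the clouds of `x` and `y` in the Cayley graph
of `(ℤ/m)^{E ∖ T}` obtained by collapsing the clouds associated to the maximal spanning
tree `T`: the least number of lifts of edges outside `T` traversed by a walk from `x` to `y`
in the cover. -/
noncomputable def cloudDist (m : ℕ) (src tgt : E → V) (T₀ : Set E) (T : Set E)
    (x y : V × ({e' : E // e' ∉ T₀} → ZMod m)) : ℕ :=
  sInf {n | ∃ p, IsWalk (coverSrc m src T₀) (coverTgt m tgt T₀) x y p ∧
    (p.filter fun s => s.1.1 ∉ T).length = n}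

open Classical in
/-- The cloud `C^T_x ∈ (ℤ/m)^{E ∖ T}` containing `x`, computed from a chosen geodesic from a
fixed basepoint of the cover to `x` by counting signed traversals of lifts of edges outside
`T`. -/
noncomputable def cloud (m : ℕ) (src tgt : E → V) (T₀ : Set E) (T : Set E)
    (x : V × ({e' : E // e' ∉ T₀} → ZMod m)) : {e : E // e ∉ T} → ZMod m :=
  if h : Nonempty (V × ({e' : E // e' ∉ T₀} → ZMod m)) then
    fun f =>
      (((countLiftF m T₀ f.1 (geod (coverSrc m src T₀) (coverTgt m tgt T₀) h.some x) : ℤ) -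
        (countLiftB m T₀ f.1 (geod (coverSrc m src T₀) (coverTgt m tgt T₀) h.some x) : ℤ)
          : ℤ) : ZMod m)
  else fun _ => 0

end Cover

/-- `(pV, pE)` is a covering of multigraphs: it commutes with the endpoint maps, and steps
lift uniquely at every vertex. -/
def IsGraphCovering {V' E' : Type*} (src tgt : E → V) (src' tgt' : E' → V')
    (pV : V' → V) (pE : E' → E) : Prop :=
  (∀ e : E', pV (src' e) = src (pE e)) ∧ (∀ e : E', pV (tgt' e) = tgt (pE e)) ∧
  ∀ (v' : V') (s : E × Bool), stepSrc src tgt s = pV v' →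
    ∃! s' : E' × Bool, stepSrc src' tgt' s' = v' ∧ pE s'.1 = s.1 ∧ s'.2 = s.2

end MultiGraph

/-- The word length of `a` with respect to the symmetrization of the generating set `S`
in an additive group. -/
noncomputable def addWordLength {A : Type*} [AddGroup A] (S : Set A) (a : A) : ℕ :=
  sInf {n | ∃ l : List A, (∀ x ∈ l, x ∈ S ∨ -x ∈ S) ∧ l.sum = a ∧ l.length = n}

open Classical in
/-- The word metric on `(ℤ/m)^r` with respect to the standard generating set
(one canonical generator for each factor). -/
noncomputable def zmodWordDist (m r : ℕ) (a b : Fin r → ZMod m) : ℕ :=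
  addWordLength {g : Fin r → ZMod m | ∃ i : Fin r, g = Pi.single i 1} (b - a)

/-!
The *flow* of a walk records the signed number of times it crosses each edge. Pairing it with the
indicator function of the fundamental cut of a tree edge shows that two walks with the same
endpoints whose flows agree modulo `m` off a spanning tree `T` have flows agreeing modulo `m`
everywhere. With `T = T₀` this says that the flow modulo `m` of the projection of a walk in the
cover depends only on its endpoints `x`, `y`; call it `κ(x, y) ∈ (ℤ/m)^E`. It is additive in the
sense that `κ(x, z) = κ(x, y) + κ(y, z)`.

For an arbitrary spanning tree `T`, moving along `T` is free for the distance between clouds, and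
the cheapest way to realise `κ(x, y)` off `T` takes the least absolute residue of each coordinate.
Hence `d_T(C^T_x, C^T_y) = Σ_{e ∉ T} |κ(x, y)_e|`, where `|·|` is the distance to `0` in `ℤ/m`, and
exchanging the order of summation turns the sum over `T` into `Σ_e N_e |κ(x, y)_e|`. As
`min(φ, m - φ)` is `|κ(x, y)_e|`, the same sum with each nonzero `N_e` replaced by `1` is `d_Q`.
-/

section ZModNorm

variable {m : ℕ}

lemma natAbs_valMinAbs_intCast_le (n : ℤ) : (n : ZMod m).valMinAbs.natAbs ≤ n.natAbs := by
  rcases eq_or_ne m 0 with rfl | hm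
  · exact le_rfl
  · have : NeZero m := ⟨hm⟩
    exact ZMod.natAbs_min_of_le_div_two m _ _ (by simp) (ZMod.natAbs_valMinAbs_le _)

lemma natAbs_valMinAbs_intCast [NeZero m] (n : ℤ) :
    (n : ZMod m).valMinAbs.natAbs = min (n.natAbs % m) (m - n.natAbs % m) := by
  rw [← ZMod.val_natCast, ← ZMod.valMinAbs_natAbs_eq_min]
  rcases n.natAbs_eq with h | h <;> rw [h] <;> simp [ZMod.natAbs_valMinAbs_neg]

lemma isPseudoMetricOn_sum_mul_natAbs_valMinAbs {X ι : Type*} [Fintype ι]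
    {w : ι → ℝ} (hw : ∀ i, 0 ≤ w i) {κ : X → X → ι → ZMod m}
    (hκ : ∀ x y z, κ x z = κ x y + κ y z) :
    IsPseudoMetricOn fun x y => ∑ i, w i * ((κ x y i).valMinAbs.natAbs : ℝ) := by
  have self (x : X) : κ x x = 0 := by simpa using hκ x x x
  have symm (x y : X) : κ x y = -κ y x := by
    rw [eq_neg_iff_add_eq_zero, ← hκ, self]
  refine ⟨fun x => by simp [self], fun x y => ?_, fun x y z => ?_⟩
  · simp only [symm x y, Pi.neg_apply, ZMod.natAbs_valMinAbs_neg]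
  · rw [← Finset.sum_add_distrib]
    refine Finset.sum_le_sum fun i _ => ?_
    rw [← mul_add, hκ x y z, Pi.add_apply]
    refine mul_le_mul_of_nonneg_left ?_ (hw i)
    exact_mod_cast (ZMod.natAbs_valMinAbs_add_le _ _).trans (Int.natAbs_add_le _ _)

end ZModNorm

namespace MultiGraph

variable {V E : Type*} {src tgt : E → V} {T : Set E} {a b c : V} {p q : List (E × Bool)}

section Walks

lemma isWalk_append_iff :
    IsWalk src tgt a c (p ++ q) ↔ ∃ b, IsWalk src tgt a b p ∧ IsWalk src tgt b c q := by
  induction p generalizing a with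
  | nil => simp [IsWalk]
  | cons s p ih => simp only [List.cons_append, IsWalk, ih, and_assoc, exists_and_left]

lemma IsWalk.append (hp : IsWalk src tgt a b p) (hq : IsWalk src tgt b c q) :
    IsWalk src tgt a c (p ++ q) :=
  isWalk_append_iff.2 ⟨b, hp, hq⟩

lemma isWalk_singleton (s : E × Bool) :
    IsWalk src tgt (stepSrc src tgt s) (stepTgt src tgt s) [s] :=
  ⟨rfl, rfl⟩

lemma isWalk_geod (h : ∃ p, IsWalk src tgt a b p) : IsWalk src tgt a b (geod src tgt a b) := by
  have exists_geodesic : ∃ p, IsWalk src tgt a b p ∧ p.length = gdist src tgt a b := by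
    obtain ⟨p, hp⟩ := h
    exact Nat.sInf_mem (s := {n | ∃ p, IsWalk src tgt a b p ∧ p.length = n}) ⟨_, p, hp, rfl⟩
  rw [geod, dif_pos exists_geodesic]
  exact exists_geodesic.choose_spec.1

/-- The vertices visited by a walk `p` ending at `b`, in order. The end vertex is an argument
because it cannot be read off from the empty walk. -/
def vertices (src tgt : E → V) (b : V) (p : List (E × Bool)) : List V :=
  p.map (stepSrc src tgt) ++ [b]

lemma vertices_cons (s : E × Bool) :
    vertices src tgt b (s :: p) = stepSrc src tgt s :: vertices src tgt b p :=
  rfl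

lemma IsWalk.start_mem_vertices (h : IsWalk src tgt a b p) : a ∈ vertices src tgt b p := by
  cases p with
  | nil => simpa [vertices, IsWalk] using h
  | cons s p => simp [vertices_cons, h.1]

lemma IsWalk.stepSrc_mem_vertices_and_stepTgt_mem_vertices (h : IsWalk src tgt a b p)
    {s : E × Bool} (hs : s ∈ p) :
    stepSrc src tgt s ∈ vertices src tgt b p ∧ stepTgt src tgt s ∈ vertices src tgt b p := by
  obtain ⟨p₁, p₂, rfl⟩ := List.append_of_mem hs
  obtain ⟨v, -, -, h₂⟩ := isWalk_append_iff.1 h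
  have tgt_mem := h₂.start_mem_vertices
  simp only [vertices, List.map_append, List.map_cons, List.mem_append, List.mem_cons] at tgt_mem ⊢
  tauto

lemma IsWalk.nodup_map_fst (h : IsWalk src tgt a b p) (hp : (vertices src tgt b p).Nodup) :
    (p.map Prod.fst).Nodup := by
  induction p generalizing a with
  | nil => simp
  | cons s p ih =>
    rw [vertices_cons, List.nodup_cons] at hp
    rw [List.map_cons, List.nodup_cons]
    refine ⟨fun hs => ?_, ih h.2 hp.2⟩
    obtain ⟨⟨e, d⟩, ht, rfl : e = s.1⟩ := List.mem_map.1 hs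
    have ends_mem := h.2.stepSrc_mem_vertices_and_stepTgt_mem_vertices ht
    refine hp.1 ?_
    obtain ⟨e, d'⟩ := s
    cases d <;> cases d'
    exacts [ends_mem.1, ends_mem.2, ends_mem.2, ends_mem.1]

lemma IsWalk.exists_suffix_of_mem_vertices (h : IsWalk src tgt c b p)
    (ha : a ∈ vertices src tgt b p) : ∃ q, q <:+ p ∧ IsWalk src tgt a b q := by
  rcases List.mem_append.1 ha with ha | ha
  · obtain ⟨s, hs, rfl⟩ := List.mem_map.1 ha
    obtain ⟨p₁, p₂, rfl⟩ := List.append_of_mem hs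
    obtain ⟨_, -, -, h₂⟩ := isWalk_append_iff.1 h
    exact ⟨s :: p₂, List.suffix_append _ _, rfl, h₂⟩
  · exact ⟨[], List.nil_suffix, List.mem_singleton.1 ha⟩

lemma IsWalk.exists_nodup_vertices (h : IsWalk src tgt a b p) :
    ∃ q, q ⊆ p ∧ IsWalk src tgt a b q ∧ (vertices src tgt b q).Nodup := by
  induction p generalizing a with
  | nil => exact ⟨[], List.Subset.refl _, h, by simp [vertices]⟩
  | cons s p ih =>
    obtain ⟨q, hqp, hq, hnodup⟩ := ih h.2
    have hqp' : q ⊆ s :: p := List.subset_cons_of_subset s hqp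
    by_cases ha : a ∈ vertices src tgt b q
    · obtain ⟨r, hrq, hr⟩ := hq.exists_suffix_of_mem_vertices ha
      refine ⟨r, fun t ht => hqp' (hrq.subset ht), hr, hnodup.sublist ?_⟩
      exact (hrq.sublist.map _).append (List.Sublist.refl _)
    · refine ⟨s :: q, List.cons_subset.2 ⟨List.mem_cons_self, hqp'⟩, ⟨h.1, hq⟩, ?_⟩
      exact List.nodup_cons.2 ⟨h.1 ▸ ha, hnodup⟩

end Walks

section SpanningTrees

lemma IsSpanningTree.not_isWalk_of_mem (hT : IsSpanningTree src tgt T) {e : E} (he : e ∈ T)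
    (hpT : ∀ s ∈ p, s.1 ∈ T \ {e}) : ¬ IsWalk src tgt (tgt e) (src e) p := by
  intro hp
  obtain ⟨q, hqp, hq, hnodup⟩ := hp.exists_nodup_vertices
  have hqT : ∀ s ∈ q, s.1 ∈ T \ {e} := fun s hs => hpT s (hqp hs)
  have edges_nodup : (((e, true) :: q).map Prod.fst).Nodup := by
    refine List.nodup_cons.2 ⟨fun he_mem => ?_, hq.nodup_map_fst hnodup⟩
    obtain ⟨s, hs, hse⟩ := List.mem_map.1 he_mem
    exact (hqT s hs).2 hse
  have sources_nodup : (((e, true) :: q).map (stepSrc src tgt)).Nodup :=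
    ((List.perm_append_singleton _ _).nodup_iff).1 hnodup
  obtain ⟨s, hs, hsT⟩ :=
    hT.2 (src e) ((e, true) :: q) ⟨⟨rfl, hq⟩, List.cons_ne_nil _ _, edges_nodup, sources_nodup⟩
  rcases List.mem_cons.1 hs with rfl | hs
  exacts [hsT he, hsT (hqT s hs).1]

/-- The witness `S` is one side of the fundamental cut of `e`. -/
lemma IsSpanningTree.exists_cut (hT : IsSpanningTree src tgt T) {e : E} (he : e ∈ T) :
    ∃ S : Set V, tgt e ∈ S ∧ src e ∉ S ∧ ∀ g ∈ T, g ≠ e → (tgt g ∈ S ↔ src g ∈ S) := by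
  let S : Set V := {v | ∃ p, IsWalk src tgt (tgt e) v p ∧ ∀ s ∈ p, s.1 ∈ T \ {e}}
  have closed (s : E × Bool) (hs : s.1 ∈ T \ {e}) (h : stepSrc src tgt s ∈ S) :
      stepTgt src tgt s ∈ S := by
    obtain ⟨p, hp, hpT⟩ := h
    refine ⟨p ++ [s], hp.append (isWalk_singleton s), fun t ht => ?_⟩
    rcases List.mem_append.1 ht with ht | ht
    exacts [hpT t ht, List.mem_singleton.1 ht ▸ hs]
  refine ⟨S, ⟨[], rfl, by simp⟩, fun ⟨p, hp, hpT⟩ => hT.not_isWalk_of_mem he hpT hp,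
    fun g hg hge => ⟨closed (g, false) ⟨hg, hge⟩, closed (g, true) ⟨hg, hge⟩⟩⟩

end SpanningTrees

section Flow

/-- The contribution of a single step to the flow of a walk. -/
noncomputable def stepFlow (s : E × Bool) : E →₀ ℤ :=
  Finsupp.single s.1 (if s.2 then 1 else -1)

/-- The flow of a walk as an integral 1-chain: its value at `e` is the number of forward minus the
number of backward traversals of `e`. -/
noncomputable def flow (p : List (E × Bool)) : E →₀ ℤ :=
  (p.map stepFlow).sum

lemma flow_nil : flow ([] : List (E × Bool)) = 0 :=
  rfl

lemma flow_cons (s : E × Bool) (p : List (E × Bool)) : flow (s :: p) = stepFlow s + flow p :=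
  rfl

lemma flow_append (p q : List (E × Bool)) : flow (p ++ q) = flow p + flow q := by
  simp [flow]

lemma flow_replicate (n : ℕ) (s : E × Bool) : flow (List.replicate n s) = n • stepFlow s := by
  simp [flow]

lemma flow_apply (p : List (E × Bool)) (e : E) : flow p e = countF e p - countB e p := by
  induction p with
  | nil => simp [flow_nil, countF, countB]
  | cons s p ih =>
    obtain ⟨f, d⟩ := s
    rw [flow_cons, Finsupp.add_apply, ih]
    by_cases hf : f = e <;> cases d <;> simp [stepFlow, countF, countB, hf] <;> ring

lemma flow_apply_eq_zero {e : E} (h : ∀ s ∈ p, s.1 ≠ e) : flow p e = 0 := by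
  simp +contextual [flow_apply, countF, countB, List.filter_eq_nil_iff.2, h]

lemma IsWalk.linearCombination_flow {A : Type*} [AddCommGroup A] (h : IsWalk src tgt a b p)
    (f : V → A) :
    Finsupp.linearCombination ℤ (fun e => f (tgt e) - f (src e)) (flow p) = f b - f a := by
  induction p generalizing a with
  | nil => simp [flow_nil, show a = b from h]
  | cons s p ih =>
    obtain ⟨e, d⟩ := s
    rw [flow_cons, map_add, ih h.2, ← h.1]
    cases d <;> simp [stepFlow, stepSrc, stepTgt]

/-- Pairing both flows with the fundamental cut of a tree edge `e` isolates their values at `e`. -/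
lemma IsSpanningTree.flow_intCast_eq {m : ℕ} (hT : IsSpanningTree src tgt T)
    (hp : IsWalk src tgt a b p) (hq : IsWalk src tgt a b q)
    (h : ∀ e ∉ T, (flow p e : ZMod m) = flow q e) (e : E) : (flow p e : ZMod m) = flow q e := by
  classical
  by_cases he : e ∈ T
  · obtain ⟨S, htgt, hsrc, hcut⟩ := hT.exists_cut he
    let f : V → ZMod m := S.indicator 1
    have pairing_eq_zero :
        (flow p - flow q).sum (fun g n => n • (f (tgt g) - f (src g))) = 0 := by
      rw [← Finsupp.linearCombination_apply, map_sub, hp.linearCombination_flow,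
        hq.linearCombination_flow, sub_self]
    have pairing_eq_apply :
        (flow p - flow q).sum (fun g n => n • (f (tgt g) - f (src g))) =
          (flow p e : ZMod m) - flow q e := by
      rw [Finsupp.sum_eq_single e]
      · simp [f, htgt, hsrc]
      · intro g _ hge
        by_cases hg : g ∈ T
        · simp [f, Set.indicator_apply, hcut g hg hge]
        · simp [h g hg]
      · simp
    exact sub_eq_zero.1 (pairing_eq_apply.symm.trans pairing_eq_zero)
  · exact h e he

end Flow

section OffSteps

open Classical in
/-- The steps of a walk along edges outside `T`; for a walk in the cover, these are the steps
between different clouds of `T`. -/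
noncomputable def offSteps (T : Set E) (p : List (E × Bool)) : List (E × Bool) :=
  p.filter fun s => s.1 ∉ T

lemma offSteps_append (T : Set E) (p q : List (E × Bool)) :
    offSteps T (p ++ q) = offSteps T p ++ offSteps T q := by
  simp [offSteps]

lemma offSteps_eq_nil (h : ∀ s ∈ p, s.1 ∈ T) : offSteps T p = [] := by
  simpa [offSteps] using h

lemma flow_offSteps_apply {e : E} (he : e ∉ T) : flow (offSteps T p) e = flow p e := by
  induction p with
  | nil => rfl
  | cons s p ih =>
    rw [← List.singleton_append, offSteps_append, flow_append, flow_append, Finsupp.add_apply,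
      Finsupp.add_apply, ih]
    by_cases hs : s.1 ∈ T
    · have hse : ∀ t ∈ [s], t.1 ≠ e := by
        rintro t ht rfl
        exact he (List.mem_singleton.1 ht ▸ hs)
      rw [offSteps_eq_nil (by simpa using hs), flow_nil, flow_apply_eq_zero hse,
        Finsupp.zero_apply]
    · simp [offSteps, hs]

lemma sum_natAbs_flow_le_length (S : Finset E) (p : List (E × Bool)) :
    ∑ e ∈ S, (flow p e).natAbs ≤ p.length := by
  classical
  induction p with
  | nil => simp [flow_nil]
  | cons s p ih =>
    calc ∑ e ∈ S, (flow (s :: p) e).natAbs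
      _ ≤ ∑ e ∈ S, ((stepFlow s e).natAbs + (flow p e).natAbs) :=
        Finset.sum_le_sum fun e _ => Int.natAbs_add_le _ _
      _ = ∑ e ∈ S, (stepFlow s e).natAbs + ∑ e ∈ S, (flow p e).natAbs :=
        Finset.sum_add_distrib
      _ ≤ 1 + p.length := by
        gcongr
        obtain ⟨f, d⟩ := s
        calc ∑ e ∈ S, (stepFlow (f, d) e).natAbs
          _ = ∑ e ∈ S, if f = e then 1 else 0 := by
            refine Finset.sum_congr rfl fun e _ => ?_
            cases d <;> by_cases hf : f = e <;> simp [stepFlow, hf]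
          _ ≤ 1 := by rw [Finset.sum_ite_eq]; split_ifs <;> simp
      _ = (s :: p).length := by rw [List.length_cons, add_comm]

lemma exists_steps_flow_eq (S : Finset E) (c : E → ℤ) :
    ∃ l : List (E × Bool), (∀ s ∈ l, s.1 ∈ S) ∧ (∀ e ∈ S, flow l e = c e) ∧
      l.length = ∑ e ∈ S, (c e).natAbs := by
  classical
  induction S using Finset.induction_on with
  | empty => exact ⟨[], by simp⟩
  | insert e S he ih =>
    obtain ⟨l, hlS, hlc, hlen⟩ := ih
    let r := List.replicate (c e).natAbs (e, decide (0 ≤ c e))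
    have hr : ∀ s ∈ r, s.1 = e := fun s hs => congrArg Prod.fst (List.eq_of_mem_replicate hs)
    refine ⟨r ++ l, fun s hs => ?_, fun g hg => ?_, ?_⟩
    · rcases List.mem_append.1 hs with hs | hs
      · exact Finset.mem_insert.2 (.inl (hr s hs))
      · exact Finset.mem_insert_of_mem (hlS s hs)
    · rw [flow_append, Finsupp.add_apply]
      rcases Finset.mem_insert.1 hg with rfl | hg
      · have hlg : ∀ s ∈ l, s.1 ≠ g := fun s hs => ne_of_mem_of_not_mem (hlS s hs) he
        rw [flow_apply_eq_zero hlg, flow_replicate]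
        rcases le_or_gt 0 (c g) with hc | hc
        · simp [stepFlow, hc, abs_of_nonneg]
        · simp [stepFlow, hc.not_ge, abs_of_neg hc]
      · have hrg : ∀ s ∈ r, s.1 ≠ g := fun s hs => hr s hs ▸ (ne_of_mem_of_not_mem hg he).symm
        rw [flow_apply_eq_zero hrg, zero_add, hlc g hg]
    · simp [r, hlen, Finset.sum_insert he]

lemma IsSpanningTree.exists_isWalk_offSteps_eq (hT : IsSpanningTree src tgt T) (a b : V)
    {l : List (E × Bool)} (hl : ∀ s ∈ l, s.1 ∉ T) :
    ∃ p, IsWalk src tgt a b p ∧ offSteps T p = l := by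
  induction l generalizing a with
  | nil =>
    obtain ⟨p, hp, hpT⟩ := hT.1 a b
    exact ⟨p, hp, offSteps_eq_nil hpT⟩
  | cons s l ih =>
    obtain ⟨p, hp, hpT⟩ := hT.1 a (stepSrc src tgt s)
    obtain ⟨q, hq, rfl⟩ := ih (stepTgt src tgt s) fun t ht => hl t (List.mem_cons_of_mem s ht)
    refine ⟨p ++ ([s] ++ q), hp.append ((isWalk_singleton s).append hq), ?_⟩
    rw [offSteps_append, offSteps_append, offSteps_eq_nil hpT]
    simp [offSteps, hl s List.mem_cons_self]

open Classical in
lemma IsSpanningTree.exists_isWalk_flow_intCast_eq [Fintype E] {m : ℕ}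
    (hT : IsSpanningTree src tgt T) (a b : V) (κ : E → ZMod m) :
    ∃ p, IsWalk src tgt a b p ∧ (∀ e ∉ T, (flow p e : ZMod m) = κ e) ∧
      (offSteps T p).length = ∑ e with e ∉ T, (κ e).valMinAbs.natAbs := by
  obtain ⟨l, hlT, hlκ, hlen⟩ :=
    exists_steps_flow_eq (Finset.univ.filter (· ∉ T)) fun e => (κ e).valMinAbs
  obtain ⟨p, hp, rfl⟩ := hT.exists_isWalk_offSteps_eq a b fun s hs => by simpa using hlT s hs
  refine ⟨p, hp, fun e he => ?_, hlen⟩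
  rw [← flow_offSteps_apply he, hlκ e (by simpa using he), ZMod.coe_valMinAbs]

end OffSteps

section HomologyCover

variable {m : ℕ} {T₀ : Set E}

/-- The deck group `(ℤ/m)^{E ∖ T₀}` of the homology cover; the cover has vertices
`V × DeckGroup m T₀` and edges `E × DeckGroup m T₀`. -/
abbrev DeckGroup (m : ℕ) (T₀ : Set E) : Type _ :=
  {e : E // e ∉ T₀} → ZMod m

/-- The projection to `X` of a walk in a cover with edge set `E × K`. -/
def proj {K : Type*} (p : List ((E × K) × Bool)) : List (E × Bool) :=
  p.map (Prod.map Prod.fst id)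

/-- The image in the deck group of the path class of a walk: lifting the walk moves the second
coordinate by this amount. -/
noncomputable def monodromy (m : ℕ) (T₀ : Set E) (p : List (E × Bool)) : DeckGroup m T₀ :=
  fun f => (flow p f.1 : ZMod m)

lemma monodromy_nil : monodromy m T₀ [] = 0 := by
  funext f
  simp [monodromy, flow_nil]

lemma monodromy_cons (s : E × Bool) (p : List (E × Bool)) :
    monodromy m T₀ (s :: p) = monodromy m T₀ [s] + monodromy m T₀ p := by
  funext f
  simp [monodromy, flow_cons, flow_nil]

lemma monodromy_singleton (e : E) (d : Bool) :
    monodromy m T₀ [(e, d)] = if d then coverRho m T₀ e else -coverRho m T₀ e := by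
  classical
  funext f
  by_cases hf : f.1 = e <;> cases d <;>
    simp [monodromy, flow_cons, flow_nil, stepFlow, coverRho, hf]

lemma IsWalk.proj {x y : V × DeckGroup m T₀} {p : List ((E × DeckGroup m T₀) × Bool)}
    (h : IsWalk (coverSrc m src T₀) (coverTgt m tgt T₀) x y p) :
    IsWalk src tgt x.1 y.1 (proj p) ∧ y.2 = x.2 + monodromy m T₀ (proj p) := by
  induction p generalizing x with
  | nil =>
    obtain rfl : x = y := h
    exact ⟨rfl, by simp [MultiGraph.proj, monodromy_nil]⟩
  | cons s p ih =>
    obtain ⟨⟨e, k⟩, d⟩ := s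
    obtain ⟨rfl, htail⟩ := h
    obtain ⟨hwalk, hdeck⟩ := ih htail
    change IsWalk src tgt _ _ ((e, d) :: MultiGraph.proj p) ∧
      _ = _ + monodromy m T₀ ((e, d) :: MultiGraph.proj p)
    rw [monodromy_cons, monodromy_singleton, hdeck]
    cases d <;> simp_all [IsWalk, stepSrc, stepTgt, coverSrc, coverTgt, add_assoc]

lemma IsWalk.exists_lift (h : IsWalk src tgt a b p) (k : DeckGroup m T₀) :
    ∃ q, IsWalk (coverSrc m src T₀) (coverTgt m tgt T₀) (a, k) (b, k + monodromy m T₀ p) q ∧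
      MultiGraph.proj q = p := by
  induction p generalizing a k with
  | nil => exact ⟨[], Prod.ext h (by simp [monodromy_nil]), rfl⟩
  | cons s p ih =>
    obtain ⟨e, d⟩ := s
    obtain ⟨rfl, htail⟩ := h
    obtain ⟨q, hq, rfl⟩ := ih htail (k + monodromy m T₀ [(e, d)])
    refine ⟨((e, if d then k else k - coverRho m T₀ e), d) :: q, ⟨?_, ?_⟩, rfl⟩
    · cases d <;> simp [stepSrc, coverSrc, coverTgt]
    · rw [monodromy_cons, ← add_assoc]
      convert hq using 1
      cases d <;> simp [stepTgt, coverSrc, coverTgt, monodromy_singleton, sub_eq_add_neg]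

lemma IsSpanningTree.connected_cover [Finite E] (hT₀ : IsSpanningTree src tgt T₀) :
    Connected (coverSrc m src T₀) (coverTgt m tgt T₀) := by
  classical
  cases nonempty_fintype E
  intro x y
  obtain ⟨p, hp, hflow, -⟩ := hT₀.exists_isWalk_flow_intCast_eq x.1 y.1
    fun e => if he : e ∉ T₀ then y.2 ⟨e, he⟩ - x.2 ⟨e, he⟩ else 0
  have hdeck : x.2 + monodromy m T₀ p = y.2 := by
    funext f
    simp [monodromy, hflow f.1 f.2, f.2]
  obtain ⟨q, hq, -⟩ := hp.exists_lift x.2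
  exact ⟨q, by rwa [hdeck] at hq⟩

/-- The class `κ(x, y) ∈ (ℤ/m)^E` of the flow of a walk from `x` to `y` in the cover, computed on
the chosen geodesic; by `IsWalk.flow_proj_intCast_eq` any other walk gives the same class. -/
noncomputable def flowClass (m : ℕ) (src tgt : E → V) (T₀ : Set E) (x y : V × DeckGroup m T₀) :
    E → ZMod m :=
  fun e => (flow (proj (geod (coverSrc m src T₀) (coverTgt m tgt T₀) x y)) e : ZMod m)

lemma IsWalk.flow_proj_intCast_eq {x y : V × DeckGroup m T₀}
    {p : List ((E × DeckGroup m T₀) × Bool)}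
    (h : IsWalk (coverSrc m src T₀) (coverTgt m tgt T₀) x y p) (hT₀ : IsSpanningTree src tgt T₀)
    (e : E) : (flow (MultiGraph.proj p) e : ZMod m) = flowClass m src tgt T₀ x y e := by
  obtain ⟨hwalk, hdeck⟩ := h.proj
  obtain ⟨hgeod, hdeck'⟩ := (isWalk_geod ⟨p, h⟩).proj
  refine hT₀.flow_intCast_eq hwalk hgeod (fun f hf => ?_) e
  exact congrFun (add_left_cancel (hdeck.symm.trans hdeck')) ⟨f, hf⟩

lemma flowClass_add [Finite E] (hT₀ : IsSpanningTree src tgt T₀) (x y z : V × DeckGroup m T₀) :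
    flowClass m src tgt T₀ x z = flowClass m src tgt T₀ x y + flowClass m src tgt T₀ y z := by
  obtain ⟨p, hp⟩ := hT₀.connected_cover x y
  obtain ⟨q, hq⟩ := hT₀.connected_cover y z
  funext e
  rw [Pi.add_apply, ← hp.flow_proj_intCast_eq hT₀, ← hq.flow_proj_intCast_eq hT₀,
    ← (hp.append hq).flow_proj_intCast_eq hT₀, proj, List.map_append, flow_append,
    Finsupp.add_apply, Int.cast_add, ← proj, ← proj]

lemma exists_isWalk_proj_eq [Finite E] (hT₀ : IsSpanningTree src tgt T₀)
    {x y : V × DeckGroup m T₀} (hp : IsWalk src tgt x.1 y.1 p)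
    (hflow : ∀ e, (flow p e : ZMod m) = flowClass m src tgt T₀ x y e) :
    ∃ q, IsWalk (coverSrc m src T₀) (coverTgt m tgt T₀) x y q ∧ proj q = p := by
  obtain ⟨-, hdeck⟩ := (isWalk_geod (hT₀.connected_cover x y)).proj
  obtain ⟨q, hq, hqp⟩ := hp.exists_lift x.2
  have hdeck' : x.2 + monodromy m T₀ p = y.2 := by
    rw [hdeck]
    exact congrArg (x.2 + ·) (funext fun f => hflow f.1)
  exact ⟨q, by rwa [hdeck'] at hq, hqp⟩

end HomologyCover

section Distances

variable {m : ℕ} {T₀ : Set E}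

open Classical in
lemma length_filter_eq_length_offSteps {K : Type*} (T : Set E) (p : List ((E × K) × Bool)) :
    (p.filter fun s => s.1.1 ∉ T).length = (offSteps T (proj p)).length := by
  simp [offSteps, proj, List.filter_map, Function.comp_def]

open Classical in
theorem cloudDist_eq_sum [Fintype E] (hT₀ : IsSpanningTree src tgt T₀)
    (hT : IsSpanningTree src tgt T) (x y : V × DeckGroup m T₀) :
    cloudDist m src tgt T₀ T x y =
      ∑ e with e ∉ T, (flowClass m src tgt T₀ x y e).valMinAbs.natAbs := by
  simp only [cloudDist, length_filter_eq_length_offSteps]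
  apply le_antisymm
  · obtain ⟨p, hp, hflow, hlen⟩ :=
      hT.exists_isWalk_flow_intCast_eq x.1 y.1 (flowClass m src tgt T₀ x y)
    have hgeod := (isWalk_geod (hT₀.connected_cover x y)).proj.1
    obtain ⟨q, hq, rfl⟩ := exists_isWalk_proj_eq hT₀ hp (hT.flow_intCast_eq hp hgeod hflow)
    exact Nat.sInf_le ⟨q, hq, hlen⟩
  · obtain ⟨q, hq⟩ := hT₀.connected_cover x y
    refine le_csInf ⟨_, q, hq, rfl⟩ ?_
    rintro _ ⟨p, hp, rfl⟩
    calc ∑ e with e ∉ T, (flowClass m src tgt T₀ x y e).valMinAbs.natAbs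
      _ ≤ ∑ e with e ∉ T, (flow (offSteps T (proj p)) e).natAbs := by
        refine Finset.sum_le_sum fun e he => ?_
        rw [flow_offSteps_apply (Finset.mem_filter.1 he).2, ← hp.flow_proj_intCast_eq hT₀]
        exact natAbs_valMinAbs_intCast_le _
      _ ≤ (offSteps T (proj p)).length := sum_natAbs_flow_le_length _ _

lemma numTreesAvoiding_eq_card_filter [Fintype E] (src tgt : E → V) (e : E)
    [DecidablePred fun T : Set E => IsSpanningTree src tgt T ∧ e ∉ T] :
    numTreesAvoiding src tgt e =
      (Finset.univ.filter fun T : Set E => IsSpanningTree src tgt T ∧ e ∉ T).card := by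
  rw [numTreesAvoiding, Nat.card_eq_fintype_card, Fintype.card_subtype]

lemma finsum_cloudDist_eq_sum [Fintype E] (hT₀ : IsSpanningTree src tgt T₀)
    (x y : V × DeckGroup m T₀) :
    ∑ᶠ (T : Set E) (_ : IsSpanningTree src tgt T), (cloudDist m src tgt T₀ T x y : ℝ) =
      ∑ e, (numTreesAvoiding src tgt e : ℝ) *
        ((flowClass m src tgt T₀ x y e).valMinAbs.natAbs : ℝ) := by
  classical
  rw [finsum_cond_eq_sum_of_cond_iff (t := {T | IsSpanningTree src tgt T}) _ (by simp)]
  calc ∑ T with IsSpanningTree src tgt T, (cloudDist m src tgt T₀ T x y : ℝ)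
    _ = ∑ T with IsSpanningTree src tgt T, ∑ e with e ∉ T,
          ((flowClass m src tgt T₀ x y e).valMinAbs.natAbs : ℝ) := by
      refine Finset.sum_congr rfl fun T hT => ?_
      rw [cloudDist_eq_sum hT₀ (Finset.mem_filter.1 hT).2, Nat.cast_sum]
    _ = ∑ e, ∑ T with IsSpanningTree src tgt T ∧ e ∉ T,
          ((flowClass m src tgt T₀ x y e).valMinAbs.natAbs : ℝ) :=
      Finset.sum_comm' (by simp)
    _ = _ := by simp [numTreesAvoiding_eq_card_filter]

lemma countLiftF_eq_countF_proj (e : E) (p : List ((E × DeckGroup m T₀) × Bool)) :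
    countLiftF m T₀ e p = countF e (proj p) := by
  simp [countLiftF, countF, proj, List.filter_map, Function.comp_def]

lemma countLiftB_eq_countB_proj (e : E) (p : List ((E × DeckGroup m T₀) × Bool)) :
    countLiftB m T₀ e p = countB e (proj p) := by
  simp [countLiftB, countB, proj, List.filter_map, Function.comp_def]

lemma min_phi_eq_natAbs_valMinAbs [NeZero m] (src tgt : E → V) (e : E) (x y : V × DeckGroup m T₀) :
    min (phi m src tgt T₀ e x y : ℝ) ((m : ℝ) - (phi m src tgt T₀ e x y : ℝ)) =
      ((flowClass m src tgt T₀ x y e).valMinAbs.natAbs : ℝ) := by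
  rw [flowClass, natAbs_valMinAbs_intCast, phi, countLiftF_eq_countF_proj,
    countLiftB_eq_countB_proj, ← flow_apply, Nat.cast_min,
    Nat.cast_sub (Nat.mod_lt _ (NeZero.pos m)).le]

/-- The factor `N_e / N_e` is `1`, except that it is `0` when every spanning tree contains `e`. -/
theorem dQ_eq_sum [NeZero m] [Fintype E] (src tgt : E → V) (x y : V × DeckGroup m T₀) :
    dQ m src tgt T₀ x y =
      ∑ e, (numTreesAvoiding src tgt e / numTreesAvoiding src tgt e : ℝ) *
        ((flowClass m src tgt T₀ x y e).valMinAbs.natAbs : ℝ) := by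
  classical
  simp only [dQ, min_phi_eq_natAbs_valMinAbs]
  rw [finsum_eq_sum_of_fintype]
  refine Finset.sum_congr rfl fun e _ => ?_
  rw [finsum_cond_eq_sum_of_cond_iff (t := {T | IsSpanningTree src tgt T ∧ e ∉ T}) _ (by simp),
    Finset.sum_const, ← numTreesAvoiding_eq_card_filter, nsmul_eq_mul, ← mul_assoc, mul_one_div]

theorem isPseudoMetricOn_dQ [NeZero m] [Finite E] (hT₀ : IsSpanningTree src tgt T₀) :
    IsPseudoMetricOn (dQ m src tgt T₀) := by
  cases nonempty_fintype E
  rw [funext₂ (dQ_eq_sum (m := m) (T₀ := T₀) src tgt)]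
  exact isPseudoMetricOn_sum_mul_natAbs_valMinAbs (fun _ => by positivity) (flowClass_add hT₀)

theorem dQ_eq_average_cloudDist [NeZero m] [Finite E] (hT₀ : IsSpanningTree src tgt T₀) {N : ℕ}
    (hN : ∀ e : E, numTreesAvoiding src tgt e = N) (x y : V × DeckGroup m T₀) :
    dQ m src tgt T₀ x y =
      (1 / (N : ℝ)) * ∑ᶠ (T : Set E) (_ : IsSpanningTree src tgt T),
        (cloudDist m src tgt T₀ T x y : ℝ) := by
  cases nonempty_fintype E
  rw [dQ_eq_sum, finsum_cloudDist_eq_sum hT₀, Finset.mul_sum]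
  refine Finset.sum_congr rfl fun e _ => ?_
  rw [hN e]
  ring

end Distances

end MultiGraph

open MultiGraph in
theorem dQ_eq_average_cloud_dist_and_pseudometric_general {m : ℕ} [NeZero m]
    {V E : Type*} [Finite E] {src tgt : E → V} {T₀ : Set E} (hT₀ : IsSpanningTree src tgt T₀) :
    (∀ N : ℕ, (∀ e : E, numTreesAvoiding src tgt e = N) →
      ∀ x y : V × ({e : E // e ∉ T₀} → ZMod m),
        dQ m src tgt T₀ x y =
          (1 / (N : ℝ)) * ∑ᶠ (T : Set E) (_ : IsSpanningTree src tgt T),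
            (cloudDist m src tgt T₀ T x y : ℝ)) ∧
    IsPseudoMetricOn (dQ m src tgt T₀) :=
  ⟨fun _ hN => dQ_eq_average_cloudDist hT₀ hN, isPseudoMetricOn_dQ hT₀⟩

open MultiGraph in
/-- When the number `N` of maximal spanning trees avoiding an edge does not depend on the
edge, `d_Q(x,y) = (1/N) · Σ_T d_T(C^T_x, C^T_y)`, the sum ranging over all maximal
spanning trees `T` of `X`; consequently `d_Q` is a pseudometric on the cover `X̃`. -/
theorem dQ_eq_average_cloud_dist_and_pseudometric (m : ℕ) (hm : 3 ≤ m)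
    (V E : Type) [Fintype V] [Fintype E]
    (src tgt : E → V) (hconn : Connected src tgt) (h2conn : TwoConnected src tgt)
    (N : ℕ) (hN : ∀ e : E, numTreesAvoiding src tgt e = N)
    (T₀ : Set E) (hT₀ : IsSpanningTree src tgt T₀) :
    (∀ x y : V × ({e : E // e ∉ T₀} → ZMod m),
      dQ m src tgt T₀ x y =
        (1 / (N : ℝ)) * ∑ᶠ (T : Set E) (_ : IsSpanningTree src tgt T),
          (cloudDist m src tgt T₀ T x y : ℝ)) ∧
    IsPseudoMetricOn (dQ m src tgt T₀) := by
  have : NeZero m := ⟨by omega⟩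
  exact (dQ_eq_average_cloud_dist_and_pseudometric_general hT₀).imp_left fun h => h N hN
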